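/- Let F and F' be i-faces of a connected abstract simplicial complex K with weight function w such that F ∩ F' = E is an (i−1)-face. Then the Ricci curvature satisfies κ(F, F') ≥ (1/(i+1))·{ 3 + Σ_{F'' ∈ (Γ(F) ∖ Γ_E(F)) ∩ Γ(F')} ( 2·w(F'')/min(deg Ē, deg Ē') + w(F'')/max(deg Ē, deg Ē') ) } − (w(F) + w(F'))/((i+1)·deg E) − 2, where for each such F'', Ē = F ∩ F'' and Ē' = F' ∩ F''. -/

import Mathlib

/-!
The measure of the random walk from `F` decomposes as
`m_F^ε = (1 - ε) δ_F + ε/(i+1) ∑_{E ∈ ∂F} U_E`, where `U_E` is the probability measure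
on the `i`-faces containing `E` that is proportional to `w` (`pm_eq`). Let
`E = F ∩ F'`. The faces in `∂F` other than `E` are the `F ∖ x` for `x ∈ E`, and likewise
for `F'`. An explicit coupling of `m_F^ε` and `m_{F'}^ε` moves `(1 - ε) δ_F` to
`(1 - ε) δ_{F'}`, leaves `U_E` in place, and couples `U_{F ∖ x}` with `U_{F' ∖ x}` by the
product measure (`isCost_explicit`).

* Two faces containing `F ∖ x` and `F' ∖ x` respectively are joined by a path through `F`
  and `F'`, so the product coupling costs at most `3`.
* If `P = (F ∪ F') ∖ x` is a face, it contains both `F ∖ x` and `F' ∖ x`, hence is equal or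
  connected to every face in the two supports, and the product coupling costs at most
  `(1 - p) + (1 - q)` with `p = U_{F ∖ x}(P)` and `q = U_{F' ∖ x}(P)`. As `p, q ≤ 1`, this is
  at most `3 - 2 max(p, q) - min(p, q)`.

The faces `F''` indexing the sum in the theorem are exactly those `P`, so `κ_ε / ε` satisfies
the lower bound for each `ε ∈ (0, 1]`, even without the term `-(w F + w F') / ((i+1) deg E)`.

The limit defining `ricci` exists and dominates each `κ_ε / ε`: mixing a coupling at `ε'` with
the point mass at `(F, F')` shows that `κ_ε / ε` is antitone on `(0, 1]` (`kappa_div_anti`), and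
it is bounded above because mass `1 - O(ε)` has to leave `F` (`one_sub_le_wass`).
-/


open Finset Filter

namespace SCRicci

variable {V : Type*}

/-- `K` is an abstract simplicial complex: faces are nonempty finite sets and
nonempty subsets of faces are again faces. -/
def IsComplex [DecidableEq V] (K : Finset (Finset V)) : Prop :=
  ∀ F ∈ K, F.Nonempty ∧ ∀ E : Finset V, E ⊆ F → E.Nonempty → E ∈ K

/-- The set `S_i(K)` of `i`-faces of `K` (faces of cardinality `i+1`). -/
def faces [DecidableEq V] (K : Finset (Finset V)) (i : ℕ) : Finset (Finset V) :=
  K.filter fun F => F.card = i + 1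

/-- Two `i`-faces are connected, `F ~ F'`, if they are distinct and share a common
`(i-1)`-face, which is necessarily `F ∩ F'`. -/
def Conn [DecidableEq V] (i : ℕ) (F F' : Finset V) : Prop :=
  F ≠ F' ∧ (F ∩ F').card = i

noncomputable section

/-- The degree of an `(i-1)`-face `E`: the sum of the weights of the `i`-faces
containing `E`. -/
def deg [DecidableEq V] (K : Finset (Finset V)) (w : Finset V → ℝ) (i : ℕ)
    (E : Finset V) : ℝ :=
  ∑ F ∈ faces K i, if E ⊆ F then w F else 0

/-- `Chain K i n F F'`: there is a path of length `n` of consecutively connected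
`i`-faces from `F` to `F'`. -/
def Chain [DecidableEq V] (K : Finset (Finset V)) (i : ℕ) :
    ℕ → Finset V → Finset V → Prop
  | 0, F, F' => F = F'
  | n + 1, F, F' => ∃ G ∈ faces K i, Conn i F G ∧ Chain K i n G F'

/-- The distance between two `i`-faces: the length of a shortest path of
consecutively connected `i`-faces. -/
def fdist [DecidableEq V] (K : Finset (Finset V)) (i : ℕ) (F F' : Finset V) : ℕ :=
  sInf {n | Chain K i n F F'}

/-- `K` is connected in dimension `i`: any two `i`-faces are joined by a path of
consecutively connected `i`-faces. -/
def ComplexConnected [DecidableEq V] (K : Finset (Finset V)) (i : ℕ) : Prop :=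
  ∀ F ∈ faces K i, ∀ F' ∈ faces K i, ∃ n, Chain K i n F F'

/-- The probability measure `m_F^ε` on the `i`-faces of `K`. -/
def pm [DecidableEq V] (K : Finset (Finset V)) (w : Finset V → ℝ) (i : ℕ) (ε : ℝ)
    (F F' : Finset V) : ℝ :=
  if F' = F then
    1 - ε + ε / ((i : ℝ) + 1) * ∑ E ∈ F.powersetCard i, w F / deg K w i E
  else if F' ∈ faces K i ∧ (F ∩ F').card = i then
    ε * w F' / (((i : ℝ) + 1) * deg K w i (F ∩ F'))
  else 0

/-- The 1-Wasserstein distance between two measures on the `i`-faces of `K`: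
the infimum of the transport cost over all couplings. -/
def Wass [DecidableEq V] (K : Finset (Finset V)) (i : ℕ) (μ ν : Finset V → ℝ) : ℝ :=
  sInf {c : ℝ | ∃ A : Finset V → Finset V → ℝ,
    (∀ F₁ F₂, 0 ≤ A F₁ F₂) ∧
    (∀ F₁ ∈ faces K i, ∑ F₂ ∈ faces K i, A F₁ F₂ = μ F₁) ∧
    (∀ F₂ ∈ faces K i, ∑ F₁ ∈ faces K i, A F₁ F₂ = ν F₂) ∧
    c = ∑ F₁ ∈ faces K i, ∑ F₂ ∈ faces K i, A F₁ F₂ * (fdist K i F₁ F₂ : ℝ)}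

/-- The `ε`-Ricci curvature of two distinct `i`-faces:
`κ_ε(F, F') = 1 - W(m_F^ε, m_{F'}^ε) / d(F, F')`. -/
def kappaEps [DecidableEq V] (K : Finset (Finset V)) (w : Finset V → ℝ) (i : ℕ)
    (ε : ℝ) (F F' : Finset V) : ℝ :=
  1 - Wass K i (pm K w i ε F) (pm K w i ε F') / (fdist K i F F' : ℝ)

/-- The Ricci curvature `κ(F, F')`: the limit of `κ_ε(F, F') / ε` as `ε → 0+`. -/
def ricci [DecidableEq V] (K : Finset (Finset V)) (w : Finset V → ℝ) (i : ℕ)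
    (F F' : Finset V) : ℝ :=
  limUnder (nhdsWithin (0 : ℝ) (Set.Ioi 0)) fun ε => kappaEps K w i ε F F' / ε

section Aux

variable [DecidableEq V] {K : Finset (Finset V)} {i : ℕ} {w : Finset V → ℝ}

/-! ### Paths and distances -/

lemma Chain.trans {m n : ℕ} {A B C : Finset V} (h₁ : Chain K i m A B)
    (h₂ : Chain K i n B C) : Chain K i (m + n) A C := by
  induction m generalizing A with
  | zero =>
    have h : A = B := h₁
    subst h
    simpa using h₂
  | succ m ih =>
    obtain ⟨G, hG, hc, hr⟩ := h₁
    rw [Nat.succ_add]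
    exact ⟨G, hG, hc, ih hr⟩

lemma mem_faces {F : Finset V} : F ∈ faces K i ↔ F ∈ K ∧ F.card = i + 1 := by
  simp [faces]

lemma card_inter_of_subset {E A B : Finset V} (hA : A ∈ faces K i) (hB : B ∈ faces K i)
    (hE : E.card = i) (hEA : E ⊆ A) (hEB : E ⊆ B) (hne : A ≠ B) : (A ∩ B).card = i := by
  have hA' := (mem_faces.1 hA).2
  have hB' := (mem_faces.1 hB).2
  have h1 : E.card ≤ (A ∩ B).card := card_le_card (subset_inter hEA hEB)
  have h2 : (A ∩ B).card < A.card := by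
    refine card_lt_card ⟨inter_subset_left, fun h => hne ?_⟩
    exact eq_of_subset_of_card_le (h.trans inter_subset_right) (by omega)
  omega

lemma chain_of_subset {E A B : Finset V} (hA : A ∈ faces K i) (hB : B ∈ faces K i)
    (hE : E.card = i) (hEA : E ⊆ A) (hEB : E ⊆ B) :
    Chain K i (if A = B then 0 else 1) A B := by
  split_ifs with h
  · exact h
  · exact ⟨B, hB, ⟨h, card_inter_of_subset hA hB hE hEA hEB h⟩, rfl⟩

lemma fdist_le {n : ℕ} {A B : Finset V} (h : Chain K i n A B) : fdist K i A B ≤ n :=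
  Nat.sInf_le h

lemma fdist_self (A : Finset V) : fdist K i A A = 0 :=
  Nat.le_zero.1 (fdist_le (n := 0) rfl)

lemma one_le_fdist (hconn : ComplexConnected K i) {A B : Finset V} (hA : A ∈ faces K i)
    (hB : B ∈ faces K i) (hne : A ≠ B) : 1 ≤ fdist K i A B := by
  have h : Chain K i (fdist K i A B) A B := Nat.sInf_mem (hconn A hA B hB)
  rcases Nat.eq_zero_or_pos (fdist K i A B) with h0 | h0
  · rw [h0] at h
    exact absurd h hne
  · exact h0

lemma ne_of_card_inter {F F' : Finset V} (hF : F ∈ faces K i) (hE : (F ∩ F').card = i) :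
    F ≠ F' := by
  rintro rfl
  have := (mem_faces.1 hF).2
  rw [inter_self] at hE
  omega

lemma fdist_eq_one (hconn : ComplexConnected K i) {F F' : Finset V} (hF : F ∈ faces K i)
    (hF' : F' ∈ faces K i) (hE : (F ∩ F').card = i) : fdist K i F F' = 1 := by
  have hne := ne_of_card_inter hF hE
  refine le_antisymm (fdist_le ⟨F', hF', ⟨hne, hE⟩, rfl⟩) (one_le_fdist hconn hF hF' hne)

/-! ### The measures `U_E` -/

/-- The probability measure on the `i`-faces containing `E` that is proportional to `w`. -/
def unifMeas (K : Finset (Finset V)) (w : Finset V → ℝ) (i : ℕ) (E G : Finset V) : ℝ :=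
  if G ∈ faces K i ∧ E ⊆ G then w G / deg K w i E else 0

lemma deg_nonneg (hw : ∀ F ∈ K, 0 < w F) (E : Finset V) : 0 ≤ deg K w i E := by
  refine sum_nonneg fun G hG => ?_
  split_ifs
  · exact (hw G (mem_faces.1 hG).1).le
  · exact le_rfl

lemma deg_pos (hw : ∀ F ∈ K, 0 < w F) {E F : Finset V} (hF : F ∈ faces K i) (hEF : E ⊆ F) :
    0 < deg K w i E := by
  refine sum_pos' (fun G hG => ?_) ⟨F, hF, ?_⟩
  · split_ifs
    · exact (hw G (mem_faces.1 hG).1).le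
    · exact le_rfl
  · rw [if_pos hEF]
    exact hw F (mem_faces.1 hF).1

lemma unifMeas_nonneg (hw : ∀ F ∈ K, 0 < w F) (E G : Finset V) : 0 ≤ unifMeas K w i E G := by
  unfold unifMeas
  split_ifs with h
  · exact div_nonneg (hw G (mem_faces.1 h.1).1).le (deg_nonneg hw E)
  · exact le_rfl

lemma sum_unifMeas (hw : ∀ F ∈ K, 0 < w F) {E F : Finset V} (hF : F ∈ faces K i)
    (hEF : E ⊆ F) : ∑ G ∈ faces K i, unifMeas K w i E G = 1 := by
  have h : ∀ G ∈ faces K i,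
      unifMeas K w i E G = (if E ⊆ G then w G else 0) / deg K w i E := by
    intro G hG
    unfold unifMeas
    by_cases h : E ⊆ G <;> simp [h, hG]
  rw [sum_congr rfl h, ← sum_div]
  exact div_self (deg_pos hw hF hEF).ne'

lemma sum_powersetCard_eq {F : Finset V} (hF : F.card = i + 1) (g : Finset V → ℝ) :
    ∑ E ∈ F.powersetCard i, g E = ∑ x ∈ F, g (F.erase x) := by
  symm
  refine sum_bij (fun x _ => F.erase x) ?_ ?_ ?_ ?_
  · intro x hx
    rw [mem_powersetCard]
    exact ⟨erase_subset _ _, by rw [card_erase_of_mem hx]; omega⟩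
  · intro x hx y hy h
    exact erase_injOn F hx hy h
  · intro E hE
    rw [mem_powersetCard] at hE
    have hc : (F \ E).card = 1 := by rw [card_sdiff_of_subset hE.1]; omega
    obtain ⟨x, hx⟩ := card_eq_one.1 hc
    have hxm : x ∈ F \ E := by rw [hx]; simp
    refine ⟨x, (mem_sdiff.1 hxm).1, ?_⟩
    rw [← sdiff_singleton_eq_erase, ← hx, Finset.sdiff_sdiff_eq_self hE.1]
  · intro x hx
    rfl

/-- The facets of `F` are `F ∩ F'` and the `F ∖ x` with `x ∈ F ∩ F'`. -/
lemma sum_powersetCard_inter {F F' : Finset V} (hF : F.card = i + 1)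
    (hE : (F ∩ F').card = i) (g : Finset V → ℝ) :
    ∑ E ∈ F.powersetCard i, g E = g (F ∩ F') + ∑ x ∈ F ∩ F', g (F.erase x) := by
  have hc : (F \ (F ∩ F')).card = 1 := by
    rw [card_sdiff_of_subset inter_subset_left]; omega
  obtain ⟨a, ha⟩ := card_eq_one.1 hc
  have h1 : F.erase a = F ∩ F' := by
    rw [← sdiff_singleton_eq_erase, ← ha, Finset.sdiff_sdiff_eq_self inter_subset_left]
  rw [sum_powersetCard_eq hF, ← sum_sdiff (inter_subset_left : F ∩ F' ⊆ F), ha, sum_singleton,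
    h1]

lemma pm_eq (ε : ℝ) {F G : Finset V} (hF : F ∈ faces K i) (hG : G ∈ faces K i) :
    pm K w i ε F G = (1 - ε) * (if G = F then 1 else 0)
      + ε / ((i : ℝ) + 1) * ∑ E ∈ F.powersetCard i, unifMeas K w i E G := by
  unfold pm
  split_ifs with h h'
  · subst h
    rw [mul_one]
    congr 2
    refine sum_congr rfl fun E hE => ?_
    rw [unifMeas, if_pos ⟨hG, (mem_powersetCard.1 hE).1⟩]
  · rw [mul_zero, zero_add, sum_eq_single (F ∩ G)]
    · rw [unifMeas, if_pos ⟨hG, inter_subset_right⟩, div_mul_div_comm]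
    · intro E hE hne
      rw [mem_powersetCard] at hE
      rw [unifMeas, if_neg]
      rintro ⟨-, hEG⟩
      exact hne (eq_of_subset_of_card_le (subset_inter hE.1 hEG) (by omega))
    · intro hn
      exact absurd (mem_powersetCard.2 ⟨inter_subset_left, h'.2⟩) hn
  · rw [mul_zero, zero_add, sum_eq_zero, mul_zero]
    intro E hE
    rw [mem_powersetCard] at hE
    rw [unifMeas, if_neg]
    rintro ⟨-, hEG⟩
    exact h' ⟨hG, card_inter_of_subset hF hG hE.2 hE.1 hEG (Ne.symm h)⟩

/-! ### Transport costs -/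

/-- `c` is the cost of some coupling of `μ` and `ν`; `Wass` is the infimum of these `c`. -/
def IsCost (K : Finset (Finset V)) (i : ℕ) (μ ν : Finset V → ℝ) (c : ℝ) : Prop :=
  ∃ A : Finset V → Finset V → ℝ,
    (∀ F₁ F₂, 0 ≤ A F₁ F₂) ∧
    (∀ F₁ ∈ faces K i, ∑ F₂ ∈ faces K i, A F₁ F₂ = μ F₁) ∧
    (∀ F₂ ∈ faces K i, ∑ F₁ ∈ faces K i, A F₁ F₂ = ν F₂) ∧
    c = ∑ F₁ ∈ faces K i, ∑ F₂ ∈ faces K i, A F₁ F₂ * (fdist K i F₁ F₂ : ℝ)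

lemma IsCost.nonneg {μ ν : Finset V → ℝ} {c : ℝ} (h : IsCost K i μ ν c) : 0 ≤ c := by
  obtain ⟨A, hA, -, -, rfl⟩ := h
  exact sum_nonneg fun _ _ => sum_nonneg fun _ _ => mul_nonneg (hA _ _) (Nat.cast_nonneg _)

lemma IsCost.wass_le {μ ν : Finset V → ℝ} {c : ℝ} (h : IsCost K i μ ν c) :
    Wass K i μ ν ≤ c :=
  csInf_le ⟨0, fun _ hc => IsCost.nonneg hc⟩ h

lemma le_wass {μ ν : Finset V → ℝ} {b c : ℝ} (h : IsCost K i μ ν c)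
    (hb : ∀ c, IsCost K i μ ν c → b ≤ c) : b ≤ Wass K i μ ν :=
  le_csInf ⟨c, h⟩ hb

/-- If the distance is bounded by `a G₁ + b G₂` on the supports, then the product coupling
costs at most the sum of the expectations of `a` and `b`. -/
lemma prod_cost_le {ι : Type*} {S : Finset ι} {μ ν a b : ι → ℝ} {d : ι → ι → ℝ}
    (hμ : ∀ G, 0 ≤ μ G) (hν : ∀ G, 0 ≤ ν G)
    (hμ1 : ∑ G ∈ S, μ G = 1) (hν1 : ∑ G ∈ S, ν G = 1)
    (hd : ∀ G₁ G₂, μ G₁ ≠ 0 → ν G₂ ≠ 0 → d G₁ G₂ ≤ a G₁ + b G₂) :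
    ∑ G₁ ∈ S, ∑ G₂ ∈ S, μ G₁ * ν G₂ * d G₁ G₂
      ≤ ∑ G ∈ S, μ G * a G + ∑ G ∈ S, ν G * b G := by
  have h1 : ∑ G₁ ∈ S, ∑ G₂ ∈ S, μ G₁ * ν G₂ * d G₁ G₂
      ≤ ∑ G₁ ∈ S, ∑ G₂ ∈ S, (μ G₁ * a G₁ * ν G₂ + μ G₁ * (ν G₂ * b G₂)) := by
    refine sum_le_sum fun G₁ _ => sum_le_sum fun G₂ _ => ?_
    by_cases h1 : μ G₁ = 0
    · simp [h1]
    by_cases h2 : ν G₂ = 0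
    · simp [h2]
    have := mul_le_mul_of_nonneg_left (hd G₁ G₂ h1 h2) (mul_nonneg (hμ G₁) (hν G₂))
    linarith
  refine h1.trans (le_of_eq ?_)
  simp_rw [sum_add_distrib, ← mul_sum, hν1, ← sum_mul, hμ1]
  ring

lemma unifMeas_ne_zero {E G : Finset V} (h : unifMeas K w i E G ≠ 0) :
    G ∈ faces K i ∧ E ⊆ G := by
  by_contra hn
  exact h (if_neg hn)

/-- The cost of the product coupling of `U_{F ∖ x}` and `U_{F' ∖ x}`. -/
def sideCost (K : Finset (Finset V)) (w : Finset V → ℝ) (i : ℕ) (F F' : Finset V) (x : V) : ℝ :=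
  ∑ G₁ ∈ faces K i, ∑ G₂ ∈ faces K i,
    unifMeas K w i (F.erase x) G₁ * unifMeas K w i (F'.erase x) G₂ * (fdist K i G₁ G₂ : ℝ)

lemma card_erase_face {F : Finset V} {x : V} (hF : F ∈ faces K i) (hx : x ∈ F) :
    (F.erase x).card = i := by
  rw [card_erase_of_mem hx, (mem_faces.1 hF).2, Nat.add_sub_cancel]

lemma sideCost_le_three (hw : ∀ F ∈ K, 0 < w F) {F F' : Finset V} (hF : F ∈ faces K i)
    (hF' : F' ∈ faces K i) (hE : (F ∩ F').card = i) {x : V} (hx : x ∈ F ∩ F') :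
    sideCost K w i F F' x ≤ 3 := by
  rw [mem_inter] at hx
  have hs := sum_unifMeas hw hF (erase_subset x F)
  have hs' := sum_unifMeas hw hF' (erase_subset x F')
  refine (prod_cost_le (a := fun _ => 1) (b := fun _ => 2) (unifMeas_nonneg hw _)
    (unifMeas_nonneg hw _) hs hs' ?_).trans ?_
  · intro G₁ G₂ h1 h2
    obtain ⟨m1, s1⟩ := unifMeas_ne_zero h1
    obtain ⟨m2, s2⟩ := unifMeas_ne_zero h2
    have c1 := chain_of_subset m1 hF (card_erase_face hF hx.1) s1 (erase_subset x F)
    have c2 := chain_of_subset hF hF' hE inter_subset_left inter_subset_right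
    have c3 := chain_of_subset hF' m2 (card_erase_face hF' hx.2) (erase_subset x F') s2
    have h : fdist K i G₁ G₂ ≤ 3 := by
      refine (fdist_le ((c1.trans c2).trans c3)).trans ?_
      split_ifs <;> omega
    have : (fdist K i G₁ G₂ : ℝ) ≤ 3 := by exact_mod_cast h
    linarith
  · rw [← sum_mul, ← sum_mul, hs, hs']
    norm_num

lemma sideCost_le_of_mem (hw : ∀ F ∈ K, 0 < w F) {F F' : Finset V} (hF : F ∈ faces K i)
    (hF' : F' ∈ faces K i) {x : V} (hx : x ∈ F ∩ F')
    (hP : (F ∪ F').erase x ∈ faces K i) :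
    sideCost K w i F F' x ≤ 2 - w ((F ∪ F').erase x) / deg K w i (F.erase x)
      - w ((F ∪ F').erase x) / deg K w i (F'.erase x) := by
  rw [mem_inter] at hx
  set P := (F ∪ F').erase x with hPdef
  have hsub : F.erase x ⊆ P := erase_subset_erase _ subset_union_left
  have hsub' : F'.erase x ⊆ P := erase_subset_erase _ subset_union_right
  have hs := sum_unifMeas hw hF (erase_subset x F)
  have hs' := sum_unifMeas hw hF' (erase_subset x F')
  have hexp : ∀ E : Finset V, E ⊆ P → ∑ G ∈ faces K i, unifMeas K w i E G = 1 →
      ∑ G ∈ faces K i, unifMeas K w i E G * (if G = P then (0 : ℝ) else 1)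
        = 1 - w P / deg K w i E := by
    intro E hEP h
    have hv : unifMeas K w i E P = w P / deg K w i E := if_pos ⟨hP, hEP⟩
    rw [← sum_erase_add (faces K i) (unifMeas K w i E) hP] at h
    rw [← hv, eq_sub_iff_add_eq, ← sum_erase_add _ _ hP, if_pos rfl, mul_zero, add_zero]
    refine Eq.trans (congrArg (· + _) (sum_congr rfl fun G hG => ?_)) h
    rw [if_neg (ne_of_mem_erase hG), mul_one]
  refine (prod_cost_le (a := fun G => if G = P then 0 else 1)
    (b := fun G => if G = P then 0 else 1) (unifMeas_nonneg hw _)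
    (unifMeas_nonneg hw _) hs hs' ?_).trans ?_
  · intro G₁ G₂ h1 h2
    obtain ⟨m1, s1⟩ := unifMeas_ne_zero h1
    obtain ⟨m2, s2⟩ := unifMeas_ne_zero h2
    have c1 := chain_of_subset m1 hP (card_erase_face hF hx.1) s1 hsub
    have c2 := chain_of_subset hP m2 (card_erase_face hF' hx.2) hsub' s2
    have h := fdist_le (c1.trans c2)
    simp only [eq_comm (a := P)] at h
    exact_mod_cast h
  · rw [hexp _ hsub hs, hexp _ hsub' hs']
    linarith

/-- The explicit coupling: `(1 - ε) δ_F` is moved to `(1 - ε) δ_{F'}`, the measure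
`U_{F ∩ F'}` stays in place, and `U_{F ∖ x}`, `U_{F' ∖ x}` are coupled by the product measure. -/
lemma isCost_explicit (hconn : ComplexConnected K i) (hw : ∀ F ∈ K, 0 < w F)
    {F F' : Finset V} (hF : F ∈ faces K i) (hF' : F' ∈ faces K i) (hE : (F ∩ F').card = i)
    {ε : ℝ} (h0 : 0 ≤ ε) (h1 : ε ≤ 1) :
    IsCost K i (pm K w i ε F) (pm K w i ε F')
      (1 - ε + ε / ((i : ℝ) + 1) * ∑ x ∈ F ∩ F', sideCost K w i F F' x) := by
  have hU := unifMeas_nonneg (i := i) hw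
  refine ⟨fun G₁ G₂ => (1 - ε) * ((if G₁ = F then 1 else 0) * (if G₂ = F' then 1 else 0))
    + ε / ((i : ℝ) + 1) * ((if G₁ = G₂ then unifMeas K w i (F ∩ F') G₁ else 0)
      + ∑ x ∈ F ∩ F', unifMeas K w i (F.erase x) G₁ * unifMeas K w i (F'.erase x) G₂),
    ?_, ?_, ?_, ?_⟩
  · intro G₁ G₂
    have hs : 0 ≤ ∑ x ∈ F ∩ F',
        unifMeas K w i (F.erase x) G₁ * unifMeas K w i (F'.erase x) G₂ :=
      sum_nonneg fun x _ => mul_nonneg (hU _ _) (hU _ _)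
    have hd : 0 ≤ if G₁ = G₂ then unifMeas K w i (F ∩ F') G₁ else 0 := by
      split_ifs
      · exact hU _ _
      · exact le_rfl
    have hp : (0 : ℝ) ≤ (if G₁ = F then 1 else 0) * (if G₂ = F' then 1 else 0) := by
      split_ifs <;> norm_num
    have : 0 ≤ 1 - ε := by linarith
    positivity
  · intro G₁ hG₁
    rw [pm_eq ε hF hG₁, sum_powersetCard_inter (mem_faces.1 hF).2 hE, sum_add_distrib,
      ← mul_sum, ← mul_sum, ← mul_sum, sum_add_distrib, sum_comm]
    congr 2
    · rw [sum_ite_eq' _ _ _, if_pos hF', mul_one]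
    · congr 1
      · rw [sum_ite_eq, if_pos hG₁]
      · refine sum_congr rfl fun x _ => ?_
        rw [← mul_sum, sum_unifMeas hw hF' (erase_subset x F'), mul_one]
  · intro G₂ hG₂
    rw [pm_eq ε hF' hG₂, sum_powersetCard_inter (F := F') (F' := F) (mem_faces.1 hF').2
      (by rw [inter_comm]; exact hE), inter_comm F' F, sum_add_distrib,
      ← mul_sum, ← mul_sum, ← sum_mul, sum_add_distrib, sum_comm]
    congr 2
    · rw [sum_ite_eq' _ _ _, if_pos hF, one_mul]
    · congr 1
      · rw [sum_ite_eq', if_pos hG₂]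
      · refine sum_congr rfl fun x _ => ?_
        rw [← sum_mul, sum_unifMeas hw hF (erase_subset x F), one_mul]
  · have hFF : (fdist K i F F' : ℝ) = 1 := by rw [fdist_eq_one hconn hF hF' hE, Nat.cast_one]
    have e1 : ∑ G₁ ∈ faces K i, ∑ G₂ ∈ faces K i,
        ((if G₁ = F then (1 : ℝ) else 0) * (if G₂ = F' then 1 else 0))
          * (fdist K i G₁ G₂ : ℝ) = 1 := by
      rw [sum_eq_single_of_mem F hF, sum_eq_single_of_mem F' hF']
      · simp [hFF]
      · intro G _ hG
        simp [hG]
      · intro G _ hG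
        simp [hG]
    have e2 : ∑ G₁ ∈ faces K i, ∑ G₂ ∈ faces K i,
        (if G₁ = G₂ then unifMeas K w i (F ∩ F') G₁ else 0) * (fdist K i G₁ G₂ : ℝ) = 0 := by
      refine sum_eq_zero fun G₁ _ => sum_eq_zero fun G₂ _ => ?_
      split_ifs with h
      · rw [h, fdist_self, Nat.cast_zero, mul_zero]
      · rw [zero_mul]
    have e3 : ∑ G₁ ∈ faces K i, ∑ G₂ ∈ faces K i,
        (∑ x ∈ F ∩ F', unifMeas K w i (F.erase x) G₁ * unifMeas K w i (F'.erase x) G₂)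
          * (fdist K i G₁ G₂ : ℝ) = ∑ x ∈ F ∩ F', sideCost K w i F F' x := by
      unfold sideCost
      rw [sum_comm (s := F ∩ F')]
      refine sum_congr rfl fun G₁ _ => ?_
      rw [sum_comm (s := F ∩ F')]
      exact sum_congr rfl fun G₂ _ => sum_mul _ _ _
    simp_rw [add_mul, mul_assoc (1 - ε), mul_assoc (ε / _), add_mul, sum_add_distrib, ← mul_sum,
      sum_add_distrib, e1, e2, e3]
    ring

/-! ### The limit as `ε → 0+` -/

/-- Mass at least `m_F^ε(F) - m_{F'}^ε(F)` has to leave `F`, and it travels distance at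
least `1`. -/
lemma one_sub_le_wass (hconn : ComplexConnected K i) (hw : ∀ F ∈ K, 0 < w F)
    {F F' : Finset V} (hF : F ∈ faces K i) (hF' : F' ∈ faces K i) (hE : (F ∩ F').card = i)
    {ε : ℝ} (h0 : 0 ≤ ε) (h1 : ε ≤ 1) :
    1 - ε - ε / ((i : ℝ) + 1) * ∑ E ∈ F'.powersetCard i, unifMeas K w i E F
      ≤ Wass K i (pm K w i ε F) (pm K w i ε F') := by
  refine le_wass (isCost_explicit hconn hw hF hF' hE h0 h1) ?_
  rintro c ⟨A, hA, hr, hc, rfl⟩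
  have hμ : 1 - ε ≤ pm K w i ε F F := by
    rw [pm_eq ε hF hF, if_pos rfl, mul_one]
    have : 0 ≤ ∑ E ∈ F.powersetCard i, unifMeas K w i E F :=
      sum_nonneg fun E _ => unifMeas_nonneg hw E F
    have : 0 ≤ ε / ((i : ℝ) + 1) * ∑ E ∈ F.powersetCard i, unifMeas K w i E F := by positivity
    linarith
  have hν : A F F ≤ ε / ((i : ℝ) + 1) * ∑ E ∈ F'.powersetCard i, unifMeas K w i E F := by
    have h := pm_eq (w := w) ε hF' hF
    rw [if_neg (ne_of_card_inter hF hE), mul_zero, zero_add] at h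
    rw [← h, ← hc F hF]
    exact single_le_sum (f := fun G => A G F) (fun G _ => hA G F) hF
  have hsplit : pm K w i ε F F = ∑ G ∈ (faces K i).erase F, A F G + A F F := by
    rw [← hr F hF, sum_erase_add _ _ hF]
  have hle : ∑ G ∈ (faces K i).erase F, A F G
      ≤ ∑ G ∈ faces K i, A F G * (fdist K i F G : ℝ) := by
    refine le_trans (sum_le_sum fun G hG => ?_) (sum_le_sum_of_subset_of_nonneg
      (erase_subset F (faces K i)) fun G _ _ => mul_nonneg (hA F G) (Nat.cast_nonneg _))
    have h : (1 : ℝ) ≤ fdist K i F G := by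
      exact_mod_cast one_le_fdist hconn hF (mem_of_mem_erase hG) (ne_of_mem_erase hG).symm
    exact le_mul_of_one_le_right (hA F G) h
  have hrow : ∑ G ∈ faces K i, A F G * (fdist K i F G : ℝ)
      ≤ ∑ G₁ ∈ faces K i, ∑ G ∈ faces K i, A G₁ G * (fdist K i G₁ G : ℝ) :=
    single_le_sum (f := fun G₁ => ∑ G ∈ faces K i, A G₁ G * (fdist K i G₁ G : ℝ))
      (fun G₁ _ => sum_nonneg fun G _ => mul_nonneg (hA G₁ G) (Nat.cast_nonneg _)) hF
  linarith

/-- The mixture of a coupling at `ε` with the point mass at `(F, F')`. -/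
lemma IsCost.mix (hconn : ComplexConnected K i)
    {F F' : Finset V} (hF : F ∈ faces K i) (hF' : F' ∈ faces K i) (hE : (F ∩ F').card = i)
    {ε t c : ℝ} (h0 : 0 ≤ t) (h1 : t ≤ 1) (h : IsCost K i (pm K w i ε F) (pm K w i ε F') c) :
    IsCost K i (pm K w i (t * ε) F) (pm K w i (t * ε) F') (t * c + (1 - t)) := by
  obtain ⟨A, hA, hr, hc, rfl⟩ := h
  have hFF : (fdist K i F F' : ℝ) = 1 := by rw [fdist_eq_one hconn hF hF' hE, Nat.cast_one]
  refine ⟨fun G₁ G₂ => t * A G₁ G₂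
    + (1 - t) * ((if G₁ = F then 1 else 0) * (if G₂ = F' then 1 else 0)), ?_, ?_, ?_, ?_⟩
  · intro G₁ G₂
    have hp : (0 : ℝ) ≤ (if G₁ = F then 1 else 0) * (if G₂ = F' then 1 else 0) := by
      split_ifs <;> norm_num
    exact add_nonneg (mul_nonneg h0 (hA _ _)) (mul_nonneg (by linarith) hp)
  · intro G₁ hG₁
    rw [sum_add_distrib, ← mul_sum, hr G₁ hG₁, ← mul_sum, ← mul_sum, sum_ite_eq', if_pos hF',
      pm_eq _ hF hG₁, pm_eq _ hF hG₁]
    ring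
  · intro G₂ hG₂
    rw [sum_add_distrib, ← mul_sum, hc G₂ hG₂, ← mul_sum, ← sum_mul, sum_ite_eq', if_pos hF,
      pm_eq _ hF' hG₂, pm_eq _ hF' hG₂]
    ring
  · have e1 : ∑ G₁ ∈ faces K i, ∑ G₂ ∈ faces K i,
        ((if G₁ = F then (1 : ℝ) else 0) * (if G₂ = F' then 1 else 0))
          * (fdist K i G₁ G₂ : ℝ) = 1 := by
      rw [sum_eq_single_of_mem F hF, sum_eq_single_of_mem F' hF']
      · simp [hFF]
      · intro G _ hG
        simp [hG]
      · intro G _ hG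
        simp [hG]
    simp_rw [add_mul, mul_assoc (1 - t), mul_assoc t, sum_add_distrib, ← mul_sum, e1]
    ring

lemma kappaEps_eq (hconn : ComplexConnected K i) {F F' : Finset V} (hF : F ∈ faces K i)
    (hF' : F' ∈ faces K i) (hE : (F ∩ F').card = i) (ε : ℝ) :
    kappaEps K w i ε F F' = 1 - Wass K i (pm K w i ε F) (pm K w i ε F') := by
  rw [kappaEps, fdist_eq_one hconn hF hF' hE, Nat.cast_one, div_one]

lemma kappa_div_anti (hconn : ComplexConnected K i) (hw : ∀ F ∈ K, 0 < w F)
    {F F' : Finset V} (hF : F ∈ faces K i) (hF' : F' ∈ faces K i) (hE : (F ∩ F').card = i)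
    {ε ε' : ℝ} (h0 : 0 < ε) (hle : ε ≤ ε') (h1 : ε' ≤ 1) :
    kappaEps K w i ε' F F' / ε' ≤ kappaEps K w i ε F F' / ε := by
  have h0' : 0 < ε' := h0.trans_le hle
  rw [kappaEps_eq hconn hF hF' hE, kappaEps_eq hconn hF hF' hE, div_le_div_iff₀ h0' h0]
  have ht : 0 < ε / ε' := div_pos h0 h0'
  have hte : ε / ε' * ε' = ε := div_mul_cancel₀ _ h0'.ne'
  have key : (Wass K i (pm K w i ε F) (pm K w i ε F') - (1 - ε / ε')) / (ε / ε')
      ≤ Wass K i (pm K w i ε' F) (pm K w i ε' F') := by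
    refine le_wass (isCost_explicit hconn hw hF hF' hE h0'.le h1) fun c hc => ?_
    have h := (hc.mix hconn hF hF' hE ht.le (div_le_one_of_le₀ hle h0'.le)).wass_le
    rw [hte] at h
    rw [div_le_iff₀ ht]
    linarith
  rw [div_le_iff₀ ht] at key
  have := mul_le_mul_of_nonneg_right key h0'.le
  rw [mul_assoc, hte, sub_mul, sub_mul, hte] at this
  linarith

lemma kappa_div_le_ricci (hconn : ComplexConnected K i) (hw : ∀ F ∈ K, 0 < w F)
    {F F' : Finset V} (hF : F ∈ faces K i) (hF' : F' ∈ faces K i) (hE : (F ∩ F').card = i) :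
    kappaEps K w i 1 F F' / 1 ≤ ricci K w i F F' := by
  set f : ℝ → ℝ := fun ε => - (kappaEps K w i ε F F' / ε) with hf
  have hmono : MonotoneOn f (Set.Ioo 0 1) := fun a ha b hb hab =>
    neg_le_neg (kappa_div_anti hconn hw hF hF' hE ha.1 hab hb.2.le)
  have hbdd : BddBelow (f '' Set.Ioo 0 1) := by
    refine ⟨-(1 + 1 / ((i : ℝ) + 1) * ∑ E ∈ F'.powersetCard i, unifMeas K w i E F), ?_⟩
    rintro _ ⟨ε, hε, rfl⟩
    refine neg_le_neg ?_
    rw [div_le_iff₀ hε.1, kappaEps_eq hconn hF hF' hE]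
    have := one_sub_le_wass hconn hw hF hF' hE hε.1.le hε.2.le
    have e : ε / ((i : ℝ) + 1) * ∑ E ∈ F'.powersetCard i, unifMeas K w i E F
      = 1 / ((i : ℝ) + 1) * (∑ E ∈ F'.powersetCard i, unifMeas K w i E F) * ε := by ring
    linarith
  have hlim : Tendsto f (nhdsWithin 0 (Set.Ioi 0)) (nhds (sInf (f '' Set.Ioo 0 1))) :=
    hmono.tendsto_nhdsWithin_Ioo_right (Set.nonempty_Ioo.2 one_pos) hbdd
  have hlim' : Tendsto (fun ε => kappaEps K w i ε F F' / ε) (nhdsWithin 0 (Set.Ioi 0))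
      (nhds (-sInf (f '' Set.Ioo 0 1))) := by
    simpa [hf] using hlim.neg
  rw [ricci, hlim'.limUnder_eq]
  refine ge_of_tendsto hlim' ?_
  filter_upwards [Ioo_mem_nhdsGT (one_pos : (0 : ℝ) < 1)] with ε hε
  exact kappa_div_anti hconn hw hF hF' hE hε.1 hε.2.le le_rfl

/-! ### Common neighbours -/

lemma inter_union_erase {F F' : Finset V} (x : V) :
    F ∩ (F ∪ F').erase x = F.erase x ∧ F' ∩ (F ∪ F').erase x = F'.erase x := by
  constructor <;> (ext y; simp only [mem_inter, mem_erase, mem_union]; tauto)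

/-- A common neighbour of `F` and `F'` that does not contain `F ∩ F'` contains the two vertices
outside `F ∩ F'` and misses exactly one vertex of `F ∩ F'`. -/
lemma exists_eq_erase {F F' P : Finset V} (hF : F.card = i + 1) (hF' : F'.card = i + 1)
    (hP : P.card = i + 1) (hE : (F ∩ F').card = i) (h1 : (F ∩ P).card = i)
    (h2 : (F' ∩ P).card = i) (hne : F ∩ P ≠ F ∩ F') :
    ∃ x ∈ F ∩ F', P = (F ∪ F').erase x := by
  have hnot : ¬ F ∩ F' ⊆ P := fun h =>
    hne (eq_of_subset_of_card_le (subset_inter inter_subset_left h) (by omega)).symm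
  obtain ⟨x, hx, hxP⟩ := not_subset.1 hnot
  rw [mem_inter] at hx
  have e1 : F ∩ P = F.erase x := by
    refine eq_of_subset_of_card_le (fun y hy => ?_) (by rw [card_erase_of_mem hx.1]; omega)
    rw [mem_inter] at hy
    exact mem_erase.2 ⟨fun h => hxP (h ▸ hy.2), hy.1⟩
  have e2 : F' ∩ P = F'.erase x := by
    refine eq_of_subset_of_card_le (fun y hy => ?_) (by rw [card_erase_of_mem hx.2]; omega)
    rw [mem_inter] at hy
    exact mem_erase.2 ⟨fun h => hxP (h ▸ hy.2), hy.1⟩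
  refine ⟨x, mem_inter.2 hx, (eq_of_subset_of_card_le (fun y hy => ?_) ?_).symm⟩
  · rw [mem_erase, mem_union] at hy
    rcases hy.2 with h | h
    · have : y ∈ F ∩ P := by rw [e1]; exact mem_erase.2 ⟨hy.1, h⟩
      exact (mem_inter.1 this).2
    · have : y ∈ F' ∩ P := by rw [e2]; exact mem_erase.2 ⟨hy.1, h⟩
      exact (mem_inter.1 this).2
  · have := card_union_add_card_inter F F'
    rw [card_erase_of_mem (mem_union_left _ hx.1)]
    omega

/-- The gain of the face `P = F''` in the lower bound. -/
def gain (K : Finset (Finset V)) (w : Finset V → ℝ) (i : ℕ) (F F' P : Finset V) : ℝ :=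
  2 * w P / min (deg K w i (F ∩ P)) (deg K w i (F' ∩ P))
    + w P / max (deg K w i (F ∩ P)) (deg K w i (F' ∩ P))

lemma gain_le (hw : ∀ F ∈ K, 0 < w F) {F F' : Finset V} (hF : F ∈ faces K i)
    (hF' : F' ∈ faces K i) {x : V} (hx : x ∈ F ∩ F') (hP : (F ∪ F').erase x ∈ faces K i) :
    gain K w i F F' ((F ∪ F').erase x) ≤ 3 - sideCost K w i F F' x := by
  have hc := sideCost_le_of_mem hw hF hF' hx hP
  rw [gain, (inter_union_erase x).1, (inter_union_erase x).2]
  have hle : ∀ E : Finset V, E ⊆ (F ∪ F').erase x →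
      w ((F ∪ F').erase x) / deg K w i E ≤ 1 := by
    intro E hE
    have h := single_le_sum (f := unifMeas K w i E) (fun G _ => unifMeas_nonneg hw E G) hP
    rw [sum_unifMeas hw hP hE, unifMeas, if_pos ⟨hP, hE⟩] at h
    exact h
  have l1 := hle (F.erase x) (erase_subset_erase _ subset_union_left)
  have l2 := hle (F'.erase x) (erase_subset_erase _ subset_union_right)
  rw [mul_div_assoc]
  rcases le_total (deg K w i (F.erase x)) (deg K w i (F'.erase x)) with h | h
  · rw [min_eq_left h, max_eq_right h]
    linarith
  · rw [min_eq_right h, max_eq_left h]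
    linarith

lemma sum_gain_le (hw : ∀ F ∈ K, 0 < w F) {F F' : Finset V} (hF : F ∈ faces K i)
    (hF' : F' ∈ faces K i) (hE : (F ∩ F').card = i) :
    ∑ P ∈ (faces K i).filter (fun P =>
        (P ≠ F ∧ (F ∩ P).card = i ∧ F ∩ P ≠ F ∩ F') ∧ (P ≠ F' ∧ (F' ∩ P).card = i)),
      gain K w i F F' P ≤ 3 * i - ∑ x ∈ F ∩ F', sideCost K w i F F' x := by
  set T := (F ∩ F').filter fun x => (F ∪ F').erase x ∈ faces K i with hT
  have hinj : Set.InjOn (fun x => (F ∪ F').erase x) (T : Set V) := by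
    intro x hx y hy h
    have hm : ∀ z ∈ (T : Set V), z ∈ F ∪ F' := fun z hz =>
      mem_union_left _ (mem_inter.1 (mem_filter.1 (mem_coe.1 hz)).1).1
    exact erase_injOn (F ∪ F') (hm x hx) (hm y hy) h
  calc _ ≤ ∑ P ∈ T.image fun x => (F ∪ F').erase x, gain K w i F F' P := by
        refine sum_le_sum_of_subset_of_nonneg ?_ ?_
        · intro P hP
          obtain ⟨hPf, ⟨-, h1, hne⟩, -, h2⟩ := mem_filter.1 hP
          obtain ⟨x, hx, rfl⟩ := exists_eq_erase (mem_faces.1 hF).2 (mem_faces.1 hF').2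
            (mem_faces.1 hPf).2 hE h1 h2 hne
          exact mem_image.2 ⟨x, mem_filter.2 ⟨hx, hPf⟩, rfl⟩
        · intro P hP _
          obtain ⟨x, hx, rfl⟩ := mem_image.1 hP
          have hwP := (hw _ (mem_faces.1 (mem_filter.1 hx).2).1).le
          have d1 := deg_nonneg (i := i) hw (F ∩ (F ∪ F').erase x)
          have d2 := deg_nonneg (i := i) hw (F' ∩ (F ∪ F').erase x)
          unfold gain
          exact add_nonneg (div_nonneg (by linarith) (le_min d1 d2))
            (div_nonneg hwP (le_max_of_le_left d1))
    _ = ∑ x ∈ T, gain K w i F F' ((F ∪ F').erase x) := sum_image hinj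
    _ ≤ ∑ x ∈ T, (3 - sideCost K w i F F' x) :=
        sum_le_sum fun x hx => gain_le hw hF hF' (mem_filter.1 hx).1 (mem_filter.1 hx).2
    _ ≤ ∑ x ∈ F ∩ F', (3 - sideCost K w i F F' x) :=
        sum_le_sum_of_subset_of_nonneg (filter_subset _ _) fun x hx _ =>
          sub_nonneg.2 (sideCost_le_three hw hF hF' hE hx)
    _ = _ := by
        rw [sum_sub_distrib, sum_const, hE, nsmul_eq_mul, mul_comm]

end Aux

/-- Lower bound for the Ricci curvature of two connected `i`-faces
`F`, `F'` with `F ∩ F' = E` an `(i-1)`-face, where the sum runs over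
`F'' ∈ (Γ(F) ∖ Γ_E(F)) ∩ Γ(F')`, `Ē = F ∩ F''` and `Ē' = F' ∩ F''`. -/
theorem ricci_lower_bound {V : Type*} [Fintype V] [DecidableEq V]
    (K : Finset (Finset V)) (i : ℕ) (hi : 1 ≤ i)
    (hK : IsComplex K) (hconn : ComplexConnected K i)
    (w : Finset V → ℝ) (hwpos : ∀ F ∈ K, 0 < w F)
    (F F' : Finset V) (hF : F ∈ faces K i) (hF' : F' ∈ faces K i)
    (hE : (F ∩ F').card = i) :
    1 / ((i : ℝ) + 1) *
        (3 + ∑ F'' ∈ (faces K i).filter (fun F'' =>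
            (F'' ≠ F ∧ (F ∩ F'').card = i ∧ F ∩ F'' ≠ F ∩ F') ∧
            (F'' ≠ F' ∧ (F' ∩ F'').card = i)),
          (2 * w F'' / min (deg K w i (F ∩ F'')) (deg K w i (F' ∩ F''))
            + w F'' / max (deg K w i (F ∩ F'')) (deg K w i (F' ∩ F''))))
      - (w F + w F') / (((i : ℝ) + 1) * deg K w i (F ∩ F')) - 2
      ≤ ricci K w i F F' := by
  have hsum := sum_gain_le hwpos hF hF' hE
  refine le_trans ?_ (kappa_div_le_ricci hconn hwpos hF hF' hE)
  have hW := (isCost_explicit hconn hwpos hF hF' hE zero_le_one le_rfl).wass_le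
  rw [div_one, kappaEps_eq hconn hF hF' hE]
  have hn : (0 : ℝ) < (i : ℝ) + 1 := by positivity
  have hdrop : 0 ≤ (w F + w F') / (((i : ℝ) + 1) * deg K w i (F ∩ F')) :=
    div_nonneg (add_nonneg (hwpos F (mem_faces.1 hF).1).le (hwpos F' (mem_faces.1 hF').1).le)
      (mul_nonneg hn.le (deg_nonneg hwpos _))
  have hmul := mul_le_mul_of_nonneg_left hsum (one_div_pos.2 hn).le
  unfold gain at hmul
  have e : 1 / ((i : ℝ) + 1) * (3 * i) = 3 - 3 * (1 / ((i : ℝ) + 1)) := by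
    field_simp
    ring
  rw [mul_sub, e] at hmul
  rw [mul_add]
  linarith

end
end SCRicci
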